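/- Let S ∈ Σⁿ, let d ≥ 1 with n > 6d, and let 1 ≤ i ≤ d and n−d+1 ≤ j ≤ n. Suppose that the factor S[i,j] is unbordered and that per(S[d+1,3d]·S[n−3d+1,n−d]) ≥ 3d. Then the concatenation S[i,3d]·S[n−3d+1,j] is unbordered. -/

import Mathlib

/-!
Suppose that `x` is a proper prefix and `y` a suffix of an unbordered string, and that `x · y` has
a proper border of length `ℓ`. If `ℓ ≤ min |x| |y|`, then the border is a prefix of `x` and a suffix
of `y`, so the unbordered string has it as well. Otherwise the period `|x| + |y| - ℓ` of `x · y` is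
less than `max |x| |y|`, and every factor of `x · y` inherits it, which is impossible as soon as
some factor has no period that short.
-/

open Finset

/-- `S` has a border of length `ℓ`: `1 ≤ ℓ ≤ |S|` and the length-`ℓ` prefix of `S`
equals its length-`ℓ` suffix. -/
def HasBorder {α : Type*} (S : List α) (ℓ : ℕ) : Prop :=
  1 ≤ ℓ ∧ ℓ ≤ S.length ∧ S.take ℓ = S.drop (S.length - ℓ)

/-- A string is unbordered if it has no proper border (no border of length `< |S|`). -/
def Unbordered {α : Type*} (S : List α) : Prop :=
  ∀ ℓ, ℓ < S.length → ¬ HasBorder S ℓ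

/-- `maxUnb S` is `L(S)`: the maximum length of (nonempty) unbordered factors of `S`. -/
noncomputable def maxUnb {α : Type*} (S : List α) : ℕ :=
  sSup {k | ∃ T, T ≠ [] ∧ T <:+: S ∧ Unbordered T ∧ T.length = k}

/-- `p > 0` is a period of `T` if `T[i] = T[i+p]` whenever both indices are valid. -/
def IsPeriod {α : Type*} (T : List α) (p : ℕ) : Prop :=
  0 < p ∧ ∀ (i : ℕ) (h : i + p < T.length),
    T[i]'(Nat.lt_of_le_of_lt (Nat.le_add_right i p) h) = T[i + p]'h

/-- `per T` is the shortest period of `T`. -/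
noncomputable def per {α : Type*} (T : List α) : ℕ := sInf {p | IsPeriod T p}

/-- `borderF S` is `F(S)`: the length of the shortest border of `S`. -/
noncomputable def borderF {α : Type*} (S : List α) : ℕ := sInf {ℓ | HasBorder S ℓ}

/-- `substr S i j` is the factor `S[i,j]` in 1-based closed-interval indexing. -/
def substr {α : Type*} (S : List α) (i j : ℕ) : List α := (S.drop (i - 1)).take (j + 1 - i)

section Borders

variable {α : Type*} {x y T W M : List α} {ℓ p : ℕ}

theorem hasBorder_iff_exists_prefix_suffix :
    HasBorder T ℓ ↔ 1 ≤ ℓ ∧ ∃ u, u.length = ℓ ∧ u <+: T ∧ u <:+ T := by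
  constructor
  · rintro ⟨hpos, hle, heq⟩
    exact ⟨hpos, T.take ℓ, List.length_take_of_le hle, List.take_prefix ℓ T,
      heq ▸ List.drop_suffix _ T⟩
  · rintro ⟨hpos, u, rfl, hpre, hsuf⟩
    exact ⟨hpos, hpre.length_le,
      (List.prefix_iff_eq_take.1 hpre).symm.trans (List.suffix_iff_eq_drop.1 hsuf)⟩

theorem HasBorder.of_append (h : HasBorder (x ++ y) ℓ) (hℓx : ℓ ≤ x.length) (hℓy : ℓ ≤ y.length)
    (hx : x <+: W) (hy : y <:+ W) : HasBorder W ℓ := by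
  obtain ⟨hpos, u, rfl, hpre, hsuf⟩ := hasBorder_iff_exists_prefix_suffix.1 h
  have hux : u <+: x := List.prefix_of_prefix_length_le hpre (List.prefix_append x y) hℓx
  have huy : u <:+ y := List.suffix_of_suffix_length_le hsuf (List.suffix_append x y) hℓy
  exact hasBorder_iff_exists_prefix_suffix.2 ⟨hpos, u, rfl, hux.trans hx, huy.trans hy⟩

theorem HasBorder.isPeriod (h : HasBorder T ℓ) (hℓ : ℓ < T.length) :
    IsPeriod T (T.length - ℓ) := by
  obtain ⟨-, -, heq⟩ := h
  refine ⟨Nat.sub_pos_of_lt hℓ, fun k hk => ?_⟩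
  have hkℓ : k < ℓ := by omega
  have hget : (T.take ℓ)[k]? = (T.drop (T.length - ℓ))[k]? := by rw [heq]
  rw [List.getElem?_take_of_lt hkℓ, List.getElem?_drop, Nat.add_comm _ k] at hget
  rwa [List.getElem?_eq_getElem, List.getElem?_eq_getElem hk, Option.some_inj] at hget

theorem IsPeriod.of_infix (h : IsPeriod T p) (hM : M <:+: T) : IsPeriod M p := by
  obtain ⟨s, t, rfl⟩ := hM
  refine ⟨h.1, fun k hk => ?_⟩
  have hshift := h.2 (s.length + k) (by simp only [List.length_append]; omega)
  simpa [List.getElem_append, Nat.add_assoc, hk, Nat.lt_of_le_of_lt (Nat.le_add_right k p) hk]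
    using hshift

theorem IsPeriod.per_le (h : IsPeriod T p) : per T ≤ p :=
  Nat.sInf_le h

theorem Unbordered.append_of_prefix_of_suffix (hW : Unbordered W) (hx : x <+: W) (hy : y <:+ W)
    (hxW : x.length < W.length) (hM : M <:+: x ++ y) (hxM : x.length ≤ per M)
    (hyM : y.length ≤ per M) : Unbordered (x ++ y) := by
  intro ℓ hℓ hborder
  have hper : per M ≤ x.length + y.length - ℓ := by
    simpa only [List.length_append] using ((hborder.isPeriod hℓ).of_infix hM).per_le
  rw [List.length_append] at hℓ
  have hℓx : ℓ ≤ x.length := by omega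
  have hℓy : ℓ ≤ y.length := by omega
  exact hW ℓ (hℓx.trans_lt hxW) (hborder.of_append hℓx hℓy hx hy)

end Borders

section Factors

variable {α : Type*} (S : List α) {i j a b : ℕ}

theorem substr_eq_drop_take (hi : 1 ≤ i) : substr S i j = (S.take j).drop (i - 1) := by
  rw [substr, List.drop_take, Nat.sub_sub_right j hi]

theorem length_substr (hi : 1 ≤ i) (hj : j ≤ S.length) : (substr S i j).length = j + 1 - i := by
  rw [substr_eq_drop_take S hi, List.length_drop, List.length_take_of_le hj,
    Nat.sub_sub_right j hi]

theorem substr_prefix_substr (haj : a ≤ j) : substr S i a <+: substr S i j :=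
  List.take_prefix_take_left (by omega)

theorem substr_suffix_substr (hi : 1 ≤ i) (hib : i ≤ b) : substr S b j <:+ substr S i j := by
  rw [substr_eq_drop_take S hi, substr_eq_drop_take S (hi.trans hib)]
  exact List.drop_suffix_drop_left _ (Nat.sub_le_sub_right hib 1)

theorem substr_append_substr_infix {c e : ℕ} (hi : 1 ≤ i) (hic : i ≤ c) (hej : e ≤ j) :
    substr S c a ++ substr S b e <:+: substr S i a ++ substr S b j := by
  obtain ⟨s, hs⟩ := substr_suffix_substr S (j := a) hi hic
  obtain ⟨t, ht⟩ := substr_prefix_substr S (i := b) hej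
  exact ⟨s, t, by simp only [← hs, ← ht, List.append_assoc]⟩

end Factors

theorem glued_unbordered_of_factor_unbordered_general {α : Type*} (S : List α) {i j a b c e : ℕ}
    (hi : 1 ≤ i) (hij : i ≤ j) (hj : j ≤ S.length) (haj : a < j) (hib : i ≤ b)
    (hic : i ≤ c) (hej : e ≤ j) (hS : Unbordered (substr S i j))
    (hleft : a + 1 - i ≤ per (substr S c a ++ substr S b e))
    (hright : j + 1 - b ≤ per (substr S c a ++ substr S b e)) :
    Unbordered (substr S i a ++ substr S b j) := by
  have hx : (substr S i a).length = a + 1 - i := length_substr S hi (haj.le.trans hj)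
  have hy : (substr S b j).length = j + 1 - b := length_substr S (hi.trans hib) hj
  have hW : (substr S i j).length = j + 1 - i := length_substr S hi hj
  exact hS.append_of_prefix_of_suffix (substr_prefix_substr S haj.le)
    (substr_suffix_substr S hi hib) (by omega) (substr_append_substr_infix S hi hic hej)
    (hx.trans_le hleft) (hy.trans_le hright)

/-- let `S ∈ Σⁿ`, `d ≥ 1`, `n > 6d`, `1 ≤ i ≤ d` and `n-d+1 ≤ j ≤ n`. If the
factor `S[i,j]` is unbordered and `per(S[d+1,3d]·S[n-3d+1,n-d]) ≥ 3d`, then the concatenation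
`S[i,3d]·S[n-3d+1,j]` is unbordered. -/
theorem glued_unbordered_of_factor_unbordered {α : Type*} (n d i j : ℕ) (S : List α)
    (hlen : S.length = n) (hd : 1 ≤ d) (hn : 6 * d < n)
    (hi1 : 1 ≤ i) (hi2 : i ≤ d) (hj1 : n - d + 1 ≤ j) (hj2 : j ≤ n)
    (h1 : Unbordered (substr S i j))
    (h2 : 3 * d ≤ per (substr S (d + 1) (3 * d) ++ substr S (n - 3 * d + 1) (n - d))) :
    Unbordered (substr S i (3 * d) ++ substr S (n - 3 * d + 1) j) := by
  apply glued_unbordered_of_factor_unbordered_general S (c := d + 1) (e := n - d) (hS := h1) <;>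
    omega
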